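/- arXiv:1303.6879 — 2 statements merged into one kernel-verified Lean document; each statement's English description precedes it below -/
import Mathlib

section
/- Let F : ℝ^n → ℝ^n be a C¹ map that is proper (the preimage of every compact set is compact) and whose derivative dF(x) is a linear isomorphism at every point x ∈ ℝ^n. Then F is bijective; in particular F is a C¹ diffeomorphism of ℝ^n. -/
/-- A proper `C¹` map `F : ℝⁿ → ℝⁿ` whose derivative is a linear
isomorphism at every point is bijective; in particular it is a `C¹` diffeomorphism. -/
theorem bijective_of_proper_of_isomorphic_derivative {n : ℕ}
    (F : EuclideanSpace ℝ (Fin n) → EuclideanSpace ℝ (Fin n))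
    (hF : ContDiff ℝ 1 F)
    (hproper : ∀ K : Set (EuclideanSpace ℝ (Fin n)), IsCompact K → IsCompact (F ⁻¹' K))
    (hiso : ∀ x, Function.Bijective (fderiv ℝ F x)) :
    Function.Bijective F ∧
      ∃ G : EuclideanSpace ℝ (Fin n) → EuclideanSpace ℝ (Fin n),
        ContDiff ℝ 1 G ∧ Function.LeftInverse G F ∧ Function.RightInverse G F := by
  have hder : ∀ x, ∃ e : EuclideanSpace ℝ (Fin n) ≃L[ℝ] EuclideanSpace ℝ (Fin n),
      HasFDerivAt F (e : EuclideanSpace ℝ (Fin n) →L[ℝ] EuclideanSpace ℝ (Fin n)) x := by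
    intro x
    refine ⟨ContinuousLinearEquiv.ofBijective (fderiv ℝ F x)
      (LinearMap.ker_eq_bot.2 (hiso x).1) (LinearMap.range_eq_top.2 (hiso x).2), ?_⟩
    rw [ContinuousLinearEquiv.coe_ofBijective]
    exact (hF.differentiable one_ne_zero x).hasFDerivAt
  choose e he using hder
  -- local homeomorphism by the inverse function theorem
  have hloc : ∀ x, ∃ φ : OpenPartialHomeomorph (EuclideanSpace ℝ (Fin n))
      (EuclideanSpace ℝ (Fin n)), x ∈ φ.source ∧ φ = F := fun x =>
    ⟨hF.contDiffAt.toOpenPartialHomeomorph F (he x) one_ne_zero,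
      hF.contDiffAt.mem_toOpenPartialHomeomorph_source (he x) one_ne_zero, rfl⟩
  have hprop : IsProperMap F :=
    isProperMap_iff_isCompact_preimage.2 ⟨hF.continuous, fun K hK => hproper K hK⟩
  -- covering map
  have hcov : IsCoveringMap F := fun y =>
    hprop.isClosedMap.isEvenlyCovered_of_openPartialHomeomorph
      ((hproper _ isCompact_singleton).finite
        (IsDiscrete.of_openPartialHomeomorph F subset_rfl fun x _ => hloc x))
      fun x _ => hloc x
  -- a global section, by lifting the identity
  obtain ⟨G, ⟨hG0, hFG⟩, -⟩ := hcov.existsUnique_continuousMap_lifts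
    (ContinuousMap.id (EuclideanSpace ℝ (Fin n))) (F 0) 0 rfl
  have hright : Function.RightInverse G F := fun y => congrFun hFG y
  have hGF : G ∘ F = id := by
    refine hcov.eq_of_comp_eq (G.continuous.comp hF.continuous) continuous_id ?_ 0 hG0
    funext x
    exact hright (F x)
  have hleft : Function.LeftInverse G F := fun x => congrFun hGF x
  refine ⟨⟨hleft.injective, hright.surjective⟩, G, ?_, hleft, hright⟩
  let H : EuclideanSpace ℝ (Fin n) ≃ₜ EuclideanSpace ℝ (Fin n) :=
    { toFun := F, invFun := G, left_inv := hleft, right_inv := hright,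
      continuous_toFun := hF.continuous, continuous_invFun := G.continuous }
  exact H.contDiff_symm (f₀' := e) he hF
end

section
/- Let F = (f₁,…,f_k) : ℝ^n → ℝ^k, k ≥ 2, be a polynomial mapping with every f_j nonconstant and f_j(0) = 0. Then N(F) ⊆ ℝ^k ∖ (ℝ∖{0})^k, and N(F) = ℝ^k ∖ (ℝ∖{0})^k if and only if for every j ∈ {1,…,k} there exists p ∈ ℤ^n with minᵢ pᵢ < 0 such that J_p = {j}. -/
open MvPolynomial

/-- The linear form `l_p(ν) = ∑ i, p i * ν i`. -/
def lP {n : ℕ} (p : Fin n → ℤ) (ν : Fin n →₀ ℕ) : ℤ := ∑ i, p i * (ν i : ℤ)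

/-- `J_p = {j : l_p(ν) > 0 for all ν ∈ supp(f_j)}`. -/
def Jset {n k : ℕ} (p : Fin n → ℤ) (f : Fin k → MvPolynomial (Fin n) ℝ) :
    Set (Fin k) :=
  { j | ∀ ν ∈ (f j).support, 0 < lP p ν }

/-- The set `N(F)`. -/
def NF {n k : ℕ} (f : Fin k → MvPolynomial (Fin n) ℝ) :
    Set (EuclideanSpace ℝ (Fin k)) :=
  { c | ∃ p : Fin n → ℤ, (∃ i, p i < 0) ∧ (Jset p f).Nonempty ∧
      ∀ j ∈ Jset p f, c j = 0 }

/-- For `k ≥ 2`, one has `N(F) ⊆ ℝᵏ ∖ (ℝ∖{0})ᵏ`, with equality if and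
only if for every `j` there is `p ∈ ℤⁿ` with `min_i p_i < 0` and `J_p = {j}`. -/
theorem NF_subset_and_eq_iff {n k : ℕ} (hk : 2 ≤ k)
    (f : Fin k → MvPolynomial (Fin n) ℝ)
    (hnc : ∀ j, (f j).totalDegree ≠ 0)
    (h0 : ∀ j, eval (0 : Fin n → ℝ) (f j) = 0) :
    NF f ⊆ { c : EuclideanSpace ℝ (Fin k) | ∃ j, c j = 0 } ∧
      (NF f = { c : EuclideanSpace ℝ (Fin k) | ∃ j, c j = 0 } ↔
        ∀ j : Fin k, ∃ p : Fin n → ℤ, (∃ i, p i < 0) ∧ Jset p f = {j}) := by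
  have hsub : NF f ⊆ { c : EuclideanSpace ℝ (Fin k) | ∃ j, c j = 0 } := by
    rintro c ⟨p, _, ⟨j, hj⟩, h⟩
    exact ⟨j, h j hj⟩
  refine ⟨hsub, ?_, ?_⟩
  · intro h j
    have hc : (WithLp.toLp 2 (fun i => if i = j then (0 : ℝ) else 1) :
        EuclideanSpace ℝ (Fin k)) ∈ NF f := by
      rw [h]
      exact ⟨j, by simp⟩
    obtain ⟨p, hp, hne, hz⟩ := hc
    refine ⟨p, hp, ?_⟩
    refine (Set.Nonempty.subset_singleton_iff hne).1 ?_
    intro i hi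
    have := hz i hi
    by_contra hij
    have hij' : i ≠ j := hij
    simp [hij'] at this
  · intro h
    refine Set.Subset.antisymm hsub ?_
    rintro c ⟨j, hj⟩
    obtain ⟨p, hp, hJ⟩ := h j
    refine ⟨p, hp, ?_, ?_⟩
    · rw [hJ]
      exact Set.singleton_nonempty j
    · intro i hi
      rw [hJ] at hi
      have hij : i = j := hi
      rw [hij]
      exact hj
end
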